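/- The family of monomials Q₁^{a₁}Q₂^{a₂}R^{ε}P₁^{b₁}P₂^{b₂}, with ε ∈ {0,1}, a₁, b₁ ∈ ℕ₀ and a₂, b₂ ∈ ℤ (negative exponents interpreted via the inverse generators), is a ℂ-vector-space basis of the algebra 𝒜. -/

import Mathlib

noncomputable section

/-- Generators of the algebra `𝒜`: `P₁, P₂, P₂⁻¹, Q₁, Q₂, Q₂⁻¹, R`. -/
inductive AGen : Type
  | P1 | P2 | P2i | Q1 | Q2 | Q2i | R

abbrev FA : Type := FreeAlgebra ℂ AGen

def gA : AGen → FA := FreeAlgebra.ι ℂ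

/-- The defining relations of the algebra `𝒜`. -/
inductive ARel (q t : ℂ) : FA → FA → Prop
  | P2P2i : ARel q t (gA .P2 * gA .P2i) 1
  | P2iP2 : ARel q t (gA .P2i * gA .P2) 1
  | Q2Q2i : ARel q t (gA .Q2 * gA .Q2i) 1
  | Q2iQ2 : ARel q t (gA .Q2i * gA .Q2) 1
  | P2P1 : ARel q t (gA .P2 * gA .P1) (gA .P1 * gA .P2)
  | Q2Q1 : ARel q t (gA .Q2 * gA .Q1) (gA .Q1 * gA .Q2)
  | P2Q2 : ARel q t (gA .P2 * gA .Q2) ((q⁻¹ ^ 4) • (gA .Q2 * gA .P2))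
  | P2Q1 : ARel q t (gA .P2 * gA .Q1) ((q⁻¹ ^ 2) • (gA .Q1 * gA .P2))
  | P1Q2 : ARel q t (gA .P1 * gA .Q2) ((q⁻¹ ^ 2) • (gA .Q2 * gA .P1))
  | P1Q1 : ARel q t (gA .P1 * gA .Q1)
      (gA .Q1 * gA .P1 + (q⁻¹ ^ 2 - 1) • gA .R)
  | P2R : ARel q t (gA .P2 * gA .R) ((q⁻¹ ^ 2) • (gA .R * gA .P2))
  | RQ2 : ARel q t (gA .R * gA .Q2) ((q⁻¹ ^ 2) • (gA .Q2 * gA .R))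
  | P1R : ARel q t (gA .P1 * gA .R)
      ((q⁻¹ ^ 2) • (gA .R * gA .P1) + (1 - q⁻¹ ^ 2) • (gA .Q1 * gA .P2))
  | RQ1 : ARel q t (gA .R * gA .Q1)
      ((q⁻¹ ^ 2) • (gA .Q1 * gA .R) + (1 - q⁻¹ ^ 2) • (gA .Q2 * gA .P1))
  | RR : ARel q t (gA .R * gA .R)
      (((1 + t ^ 2) * (q⁻¹ ^ 2 + t⁻¹ ^ 2)) • (gA .Q2 * gA .P2)
        - (q⁻¹ ^ 2) • (gA .Q2 * gA .P1 * gA .P1)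
        - (q⁻¹ ^ 2) • (gA .Q1 * gA .Q1 * gA .P2)
        + (q⁻¹ ^ 2) • (gA .Q1 * gA .R * gA .P1))

/-- The algebra `𝒜`. -/
abbrev AlgA (q t : ℂ) : Type := RingQuot (ARel q t)

variable (q t : ℂ)

def P1 : AlgA q t := RingQuot.mkAlgHom ℂ (ARel q t) (gA .P1)
def P2 : AlgA q t := RingQuot.mkAlgHom ℂ (ARel q t) (gA .P2)
def P2i : AlgA q t := RingQuot.mkAlgHom ℂ (ARel q t) (gA .P2i)
def Q1 : AlgA q t := RingQuot.mkAlgHom ℂ (ARel q t) (gA .Q1)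
def Q2 : AlgA q t := RingQuot.mkAlgHom ℂ (ARel q t) (gA .Q2)
def Q2i : AlgA q t := RingQuot.mkAlgHom ℂ (ARel q t) (gA .Q2i)
def R : AlgA q t := RingQuot.mkAlgHom ℂ (ARel q t) (gA .R)

/-- Integer powers of an element `x` with designated inverse `xi`:
negative exponents are interpreted via the inverse generator. -/
def zp {M : Type*} [Monoid M] (x xi : M) : ℤ → M
  | Int.ofNat n => x ^ n
  | Int.negSucc n => xi ^ (n + 1)

/-- The PBW family `Q₁^{a₁}Q₂^{a₂}R^{ε}P₁^{b₁}P₂^{b₂}` of `𝒜`, indexed by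
`a₁, b₁ ∈ ℕ`, `a₂, b₂ ∈ ℤ`, `ε ∈ {0,1}`. -/
def pbwA (q t : ℂ) : ℕ × ℤ × Fin 2 × ℕ × ℤ → AlgA q t :=
  fun x => Q1 q t ^ x.1 * zp (Q2 q t) (Q2i q t) x.2.1 * R q t ^ (x.2.2.1 : ℕ) *
    P1 q t ^ x.2.2.2.1 * zp (P2 q t) (P2i q t) x.2.2.2.2


/-! Model module -/

abbrev VV : Type := (ℕ × ℤ × Fin 2 × ℕ × ℤ) →₀ ℂ

def EE (a : ℕ) (b : ℤ) (s : Fin 2) (m : ℕ) (d : ℤ) : VV := Finsupp.single (a, b, s, m, d) 1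

def mkOp {M : Type*} [AddCommGroup M] [Module ℂ M]
    (f : ℕ → ℤ → Fin 2 → ℕ → ℤ → M) : VV →ₗ[ℂ] M :=
  Finsupp.linearCombination ℂ (fun i => f i.1 i.2.1 i.2.2.1 i.2.2.2.1 i.2.2.2.2)

theorem mkOp_EE {M : Type*} [AddCommGroup M] [Module ℂ M]
    (f : ℕ → ℤ → Fin 2 → ℕ → ℤ → M) (a b s m d) :
    mkOp f (EE a b s m d) = f a b s m d := by
  simp [mkOp, EE]

theorem VV_ext {M : Type*} [AddCommGroup M] [Module ℂ M] {f g : VV →ₗ[ℂ] M}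
    (h : ∀ a b s m d, f (EE a b s m d) = g (EE a b s m d)) : f = g := by
  apply Finsupp.lhom_ext'
  rintro ⟨a, b, s, m, d⟩
  apply LinearMap.ext_ring
  simpa [EE] using h a b s m d

def oX : VV →ₗ[ℂ] VV := mkOp (fun a b s m d => EE (a + 1) b s m d)
def oY : VV →ₗ[ℂ] VV := mkOp (fun a b s m d => EE a (b + 1) s m d)
def oYi : VV →ₗ[ℂ] VV := mkOp (fun a b s m d => EE a (b - 1) s m d)
def oP2 (p : ℂ) : VV →ₗ[ℂ] VV := mkOp (fun a b s m d =>
  (p ^ a * (p ^ b * p ^ b) * p ^ (s : ℕ)) • EE a b s m (d + 1))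
def oP2i (p : ℂ) : VV →ₗ[ℂ] VV := mkOp (fun a b s m d =>
  (p ^ a * (p ^ b * p ^ b) * p ^ (s : ℕ))⁻¹ • EE a b s m (d - 1))

def PR (p c : ℂ) : ℕ → ℤ → Fin 2 → ℕ → ℤ → VV × VV
  | 0, b, s, m, d => if s = 0 then (p ^ b • EE 0 b 0 (m + 1) d, p ^ b • EE 0 b 1 m d)
      else (p ^ b • (p • EE 0 b 1 (m + 1) d + (1 - p) • EE 1 b 0 m (d + 1)),
        p ^ b • (c • EE 0 (b + 1) 0 m (d + 1) - p • EE 0 (b + 1) 0 (m + 2) d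
          - p • EE 2 b 0 m (d + 1) + p • EE 1 b 1 (m + 1) d))
  | a + 1, b, s, m, d => (oX (PR p c a b s m d).1 + (p - 1) • (PR p c a b s m d).2,
      p • oX (PR p c a b s m d).2 + (1 - p) • oY (PR p c a b s m d).1)

def oP1 (p c : ℂ) : VV →ₗ[ℂ] VV := mkOp (fun a b s m d => (PR p c a b s m d).1)
def oR (p c : ℂ) : VV →ₗ[ℂ] VV := mkOp (fun a b s m d => (PR p c a b s m d).2)

theorem oX_EE (a b s m d) : oX (EE a b s m d) = EE (a + 1) b s m d := mkOp_EE _ _ _ _ _ _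
theorem oY_EE (a b s m d) : oY (EE a b s m d) = EE a (b + 1) s m d := mkOp_EE _ _ _ _ _ _
theorem oYi_EE (a b s m d) : oYi (EE a b s m d) = EE a (b - 1) s m d := mkOp_EE _ _ _ _ _ _
theorem oP2_EE (p) (a b s m d) : oP2 p (EE a b s m d) =
  (p ^ a * (p ^ b * p ^ b) * p ^ (s : ℕ)) • EE a b s m (d + 1) := mkOp_EE _ _ _ _ _ _
theorem oP2i_EE (p) (a b s m d) : oP2i p (EE a b s m d) =
  (p ^ a * (p ^ b * p ^ b) * p ^ (s : ℕ))⁻¹ • EE a b s m (d - 1) := mkOp_EE _ _ _ _ _ _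

section ops
variable {p c : ℂ}

theorem oP1_00 (b m d) : oP1 p c (EE 0 b 0 m d) = p ^ b • EE 0 b 0 (m + 1) d := by
  simp [oP1, mkOp_EE, PR]
theorem oR_00 (b m d) : oR p c (EE 0 b 0 m d) = p ^ b • EE 0 b 1 m d := by
  simp [oR, mkOp_EE, PR]
theorem oP1_01 (b m d) : oP1 p c (EE 0 b 1 m d) =
    p ^ b • (p • EE 0 b 1 (m + 1) d + (1 - p) • EE 1 b 0 m (d + 1)) := by
  simp [oP1, mkOp_EE, PR]
theorem oR_01 (b m d) : oR p c (EE 0 b 1 m d) =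
    p ^ b • (c • EE 0 (b + 1) 0 m (d + 1) - p • EE 0 (b + 1) 0 (m + 2) d
          - p • EE 2 b 0 m (d + 1) + p • EE 1 b 1 (m + 1) d) := by
  simp [oR, mkOp_EE, PR]

theorem oP1_X (v) : oP1 p c (oX v) = oX (oP1 p c v) + (p - 1) • oR p c v := by
  have : oP1 p c ∘ₗ oX = oX ∘ₗ oP1 p c + (p - 1) • oR p c := by
    apply VV_ext
    intro a b s m d
    simp [oP1, oR, mkOp_EE, oX_EE, PR]
  exact LinearMap.congr_fun this v

theorem oR_X (v) : oR p c (oX v) = p • oX (oR p c v) + (1 - p) • oY (oP1 p c v) := by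
  have : oR p c ∘ₗ oX = p • oX ∘ₗ oR p c + (1 - p) • oY ∘ₗ oP1 p c := by
    apply VV_ext
    intro a b s m d
    simp [oP1, oR, mkOp_EE, oX_EE, PR]
  exact LinearMap.congr_fun this v

theorem oX_Y (v) : oX (oY v) = oY (oX v) := by
  have : oX ∘ₗ oY = oY ∘ₗ oX := by
    apply VV_ext
    intro a b s m d
    simp [oX_EE, oY_EE]
  exact LinearMap.congr_fun this v

theorem oY_Yi (v) : oY (oYi v) = v := by
  have : oY ∘ₗ oYi = LinearMap.id := by
    apply VV_ext
    intro a b s m d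
    simp [oYi_EE, oY_EE]
  exact LinearMap.congr_fun this v

theorem oYi_Y (v) : oYi (oY v) = v := by
  have : oYi ∘ₗ oY = LinearMap.id := by
    apply VV_ext
    intro a b s m d
    simp [oYi_EE, oY_EE]
  exact LinearMap.congr_fun this v

theorem EE_succ (a b s m d) : EE (a + 1) b s m d = oX (EE a b s m d) := (oX_EE _ _ _ _ _).symm
theorem EE_one (b s m d) : EE 1 b s m d = oX (EE 0 b s m d) := (oX_EE _ _ _ _ _).symm
theorem EE_two (b s m d) : EE 2 b s m d = oX (oX (EE 0 b s m d)) := by simp [oX_EE]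

theorem PR_Y (hp : p ≠ 0) (a b s m d) :
    oP1 p c (oY (EE a b s m d)) = p • oY (oP1 p c (EE a b s m d)) ∧
    oR p c (oY (EE a b s m d)) = p • oY (oR p c (EE a b s m d)) := by
  induction a with
  | zero =>
    simp only [oY_EE]
    fin_cases s <;>
    simp only [Fin.zero_eta, Fin.mk_one, oP1_00, oP1_01, oR_00, oR_01, map_add, map_sub, map_smul, oY_EE, zpow_add_one₀ hp] <;>
    constructor <;> module
  | succ a ih =>
    rw [EE_succ, ← oX_Y, oP1_X, oR_X, oP1_X, oR_X, ih.1, ih.2]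
    simp only [map_add, map_smul, oX_Y]
    constructor <;> module

theorem oP1_Y (hp : p ≠ 0) (v) : oP1 p c (oY v) = p • oY (oP1 p c v) := by
  have : oP1 p c ∘ₗ oY = p • oY ∘ₗ oP1 p c := by
    apply VV_ext
    intro a b s m d
    simpa using (PR_Y hp a b s m d).1
  exact LinearMap.congr_fun this v

theorem oR_Y (hp : p ≠ 0) (v) : oR p c (oY v) = p • oY (oR p c v) := by
  have : oR p c ∘ₗ oY = p • oY ∘ₗ oR p c := by
    apply VV_ext
    intro a b s m d
    simpa using (PR_Y hp a b s m d).2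
  exact LinearMap.congr_fun this v

theorem oP2_X (v) : oP2 p (oX v) = p • oX (oP2 p v) := by
  have : oP2 p ∘ₗ oX = p • oX ∘ₗ oP2 p := by
    apply VV_ext
    intro a b s m d
    simp only [LinearMap.comp_apply, LinearMap.smul_apply, oX_EE, oP2_EE, map_smul]
    module
  exact LinearMap.congr_fun this v

theorem oP2_Y (hp : p ≠ 0) (v) : oP2 p (oY v) = (p * p) • oY (oP2 p v) := by
  have : oP2 p ∘ₗ oY = (p * p) • oY ∘ₗ oP2 p := by
    apply VV_ext
    intro a b s m d
    simp only [LinearMap.comp_apply, LinearMap.smul_apply, oY_EE, oP2_EE, map_smul, zpow_add_one₀ hp]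
    module
  exact LinearMap.congr_fun this v

theorem oP2_P2i (hp : p ≠ 0) (v) : oP2 p (oP2i p v) = v := by
  have : oP2 p ∘ₗ oP2i p = LinearMap.id := by
    apply VV_ext
    intro a b s m d
    have : p ^ a * (p ^ b * p ^ b) * p ^ (s : ℕ) ≠ 0 := by positivity
    simp only [LinearMap.comp_apply, LinearMap.id_apply, oP2i_EE, oP2_EE, map_smul, smul_smul,
      sub_add_cancel, inv_mul_cancel₀ this, one_smul]
  exact LinearMap.congr_fun this v

theorem oP2i_P2 (hp : p ≠ 0) (v) : oP2i p (oP2 p v) = v := by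
  have : oP2i p ∘ₗ oP2 p = LinearMap.id := by
    apply VV_ext
    intro a b s m d
    have : p ^ a * (p ^ b * p ^ b) * p ^ (s : ℕ) ≠ 0 := by positivity
    simp only [LinearMap.comp_apply, LinearMap.id_apply, oP2i_EE, oP2_EE, map_smul, smul_smul,
      add_sub_cancel_right, mul_inv_cancel₀ this, one_smul]
  exact LinearMap.congr_fun this v

theorem P2_PR (hp : p ≠ 0) (a b s m d) :
    oP2 p (oP1 p c (EE a b s m d)) = oP1 p c (oP2 p (EE a b s m d)) ∧
    oP2 p (oR p c (EE a b s m d)) = p • oR p c (oP2 p (EE a b s m d)) := by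
  induction a with
  | zero =>
    fin_cases s <;>
    simp only [Fin.zero_eta, Fin.mk_one, oP1_00, oP1_01, oR_00, oR_01, map_add, map_sub, map_smul,
      oP2_EE, zpow_add_one₀ hp, Fin.val_zero, Fin.val_one] <;>
    constructor <;> module
  | succ a ih =>
    rw [EE_succ]
    simp only [oP1_X, oR_X, map_add, map_smul, oP2_X, oP2_Y hp, ih.1, ih.2]
    constructor <;> module

theorem P1R_RR (hp : p ≠ 0) (a b s m d) :
    oP1 p c (oR p c (EE a b s m d)) = p • oR p c (oP1 p c (EE a b s m d)) +
      (1 - p) • oX (oP2 p (EE a b s m d)) ∧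
    oR p c (oR p c (EE a b s m d)) = c • oY (oP2 p (EE a b s m d))
      - p • oY (oP1 p c (oP1 p c (EE a b s m d))) - p • oX (oX (oP2 p (EE a b s m d)))
      + p • oX (oR p c (oP1 p c (EE a b s m d))) := by
  induction a with
  | zero =>
    fin_cases s <;>
    simp only [Fin.zero_eta, Fin.mk_one, oP1_00, oP1_01, oR_00, oR_01, map_add, map_sub, map_smul,
      oP2_EE, zpow_add_one₀ hp, Fin.val_zero, Fin.val_one, EE_one, EE_two, oP1_X, oR_X, oY_EE,
      ← oX_Y, smul_add, smul_sub] <;>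
    constructor <;> module
  | succ a ih =>
    rw [EE_succ]
    simp only [oP1_X, oR_X, map_add, map_sub, map_smul, oP2_X, ih.1, ih.2,
      oP1_Y hp, oR_Y hp, oX_Y, smul_add, smul_sub]
    constructor <;> module

end ops


theorem zp_units {M : Type*} [Monoid M] (u : Mˣ) (n : ℤ) :
    zp (u : M) ((u⁻¹ : Mˣ) : M) n = ((u ^ n : Mˣ) : M) := by
  cases n with
  | ofNat n => simp [zp]
  | negSucc n => simp [zp, zpow_negSucc]

theorem zp_succ {M : Type*} [Monoid M] {x xi : M} (h1 : x * xi = 1) (h2 : xi * x = 1) (n : ℤ) :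
    x * zp x xi n = zp x xi (n + 1) := by
  have := zp_units (⟨x, xi, h1, h2⟩ : Mˣ)
  simp only [Units.inv_mk] at this
  rw [this, this, add_comm, zpow_add, zpow_one, Units.val_mul]

theorem zp_pred {M : Type*} [Monoid M] {x xi : M} (h1 : x * xi = 1) (h2 : xi * x = 1) (n : ℤ) :
    xi * zp x xi n = zp x xi (n - 1) := by
  have h := zp_succ h1 h2 (n - 1)
  rw [sub_add_cancel] at h
  rw [← h, ← mul_assoc, h2, one_mul]

theorem zp_q_comm {A : Type*} [Ring A] [Algebra ℂ A] {x xi z : A} (h1 : x * xi = 1)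
    (h2 : xi * x = 1) {r : ℂ} (hr : r ≠ 0) (h : z * x = r • (x * z)) (n : ℤ) :
    z * zp x xi n = r ^ n • (zp x xi n * z) := by
  have key : ∀ n, z * zp x xi n = r ^ n • (zp x xi n * z) →
      z * zp x xi (n + 1) = r ^ (n + 1) • (zp x xi (n + 1) * z) := by
    intro n hn
    rw [← zp_succ h1 h2, ← mul_assoc, h, smul_mul_assoc, mul_assoc, hn, mul_smul_comm, smul_smul,
      zpow_add_one₀ hr, mul_comm r, mul_assoc]
  have h' : z * xi = r⁻¹ • (xi * z) := by
    have : xi * (z * x) * xi = r • (xi * (x * z) * xi) := by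
      rw [h]; simp
    rw [← mul_assoc xi x, h2, one_mul, mul_assoc, mul_assoc, h1, mul_one] at this
    rw [this, smul_smul, inv_mul_cancel₀ hr, one_smul]
  have key' : ∀ n, z * zp x xi n = r ^ n • (zp x xi n * z) →
      z * zp x xi (n - 1) = r ^ (n - 1) • (zp x xi (n - 1) * z) := by
    intro n hn
    rw [← zp_pred h1 h2, ← mul_assoc, h', smul_mul_assoc, mul_assoc, hn, mul_smul_comm, smul_smul,
      zpow_sub_one₀ hr, mul_comm r⁻¹, mul_assoc]
  induction n with
  | zero => simp [zp]
  | succ n ih => exact key _ ih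
  | pred n ih => exact key' _ ih

def cc (q t : ℂ) : ℂ := (1 + t ^ 2) * (q⁻¹ ^ 2 + t⁻¹ ^ 2)
def pp (q : ℂ) : ℂ := q⁻¹ ^ 2

theorem pp_ne {q : ℂ} (hq : q ≠ 0) : pp q ≠ 0 := by simp [pp, hq]
theorem pp4 (q : ℂ) : q⁻¹ ^ 4 = pp q * pp q := by simp only [pp]; ring

section rels
variable (q t : ℂ)

theorem r_P2P2i : P2 q t * P2i q t = 1 := by
  simpa [P2, P2i] using RingQuot.mkAlgHom_rel ℂ (ARel.P2P2i (q := q) (t := t))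
theorem r_P2iP2 : P2i q t * P2 q t = 1 := by
  simpa [P2, P2i] using RingQuot.mkAlgHom_rel ℂ (ARel.P2iP2 (q := q) (t := t))
theorem r_Q2Q2i : Q2 q t * Q2i q t = 1 := by
  simpa [Q2, Q2i] using RingQuot.mkAlgHom_rel ℂ (ARel.Q2Q2i (q := q) (t := t))
theorem r_Q2iQ2 : Q2i q t * Q2 q t = 1 := by
  simpa [Q2, Q2i] using RingQuot.mkAlgHom_rel ℂ (ARel.Q2iQ2 (q := q) (t := t))
theorem r_P2P1 : P2 q t * P1 q t = P1 q t * P2 q t := by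
  simpa [P1, P2] using RingQuot.mkAlgHom_rel ℂ (ARel.P2P1 (q := q) (t := t))
theorem r_Q2Q1 : Q2 q t * Q1 q t = Q1 q t * Q2 q t := by
  simpa [Q1, Q2] using RingQuot.mkAlgHom_rel ℂ (ARel.Q2Q1 (q := q) (t := t))
theorem r_P2Q2 : P2 q t * Q2 q t = (pp q * pp q) • (Q2 q t * P2 q t) := by
  rw [← pp4]
  simpa only [P2, Q2, map_mul, map_smul] using RingQuot.mkAlgHom_rel ℂ (ARel.P2Q2 (q := q) (t := t))
theorem r_P2Q1 : P2 q t * Q1 q t = pp q • (Q1 q t * P2 q t) := by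
  simpa only [P1, P2, Q1, Q2, R, pp, cc, map_mul, map_smul] using RingQuot.mkAlgHom_rel ℂ (ARel.P2Q1 (q := q) (t := t))
theorem r_P1Q2 : P1 q t * Q2 q t = pp q • (Q2 q t * P1 q t) := by
  simpa only [P1, P2, Q1, Q2, R, pp, cc, map_mul, map_smul] using RingQuot.mkAlgHom_rel ℂ (ARel.P1Q2 (q := q) (t := t))
theorem r_P1Q1 : P1 q t * Q1 q t = Q1 q t * P1 q t + (pp q - 1) • R q t := by
  simpa only [P1, P2, Q1, Q2, R, pp, cc, map_mul, map_smul, map_add] using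
    RingQuot.mkAlgHom_rel ℂ (ARel.P1Q1 (q := q) (t := t))
theorem r_P2R : P2 q t * R q t = pp q • (R q t * P2 q t) := by
  simpa only [P1, P2, Q1, Q2, R, pp, cc, map_mul, map_smul] using RingQuot.mkAlgHom_rel ℂ (ARel.P2R (q := q) (t := t))
theorem r_RQ2 : R q t * Q2 q t = pp q • (Q2 q t * R q t) := by
  simpa only [P1, P2, Q1, Q2, R, pp, cc, map_mul, map_smul] using RingQuot.mkAlgHom_rel ℂ (ARel.RQ2 (q := q) (t := t))
theorem r_P1R : P1 q t * R q t = pp q • (R q t * P1 q t) + (1 - pp q) • (Q1 q t * P2 q t) := by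
  simpa only [P1, P2, Q1, Q2, R, pp, cc, map_mul, map_smul, map_add] using
    RingQuot.mkAlgHom_rel ℂ (ARel.P1R (q := q) (t := t))
theorem r_RQ1 : R q t * Q1 q t = pp q • (Q1 q t * R q t) + (1 - pp q) • (Q2 q t * P1 q t) := by
  simpa only [P1, P2, Q1, Q2, R, pp, cc, map_mul, map_smul, map_add] using
    RingQuot.mkAlgHom_rel ℂ (ARel.RQ1 (q := q) (t := t))
theorem r_RR : R q t * R q t = cc q t • (Q2 q t * P2 q t) - pp q • (Q2 q t * P1 q t * P1 q t)
    - pp q • (Q1 q t * Q1 q t * P2 q t) + pp q • (Q1 q t * R q t * P1 q t) := by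
  simpa only [P1, P2, Q1, Q2, R, pp, cc, map_mul, map_smul, map_add, map_sub] using
    RingQuot.mkAlgHom_rel ℂ (ARel.RR (q := q) (t := t))

def genOp : AGen → Module.End ℂ VV
  | .P1 => oP1 (pp q) (cc q t)
  | .P2 => oP2 (pp q)
  | .P2i => oP2i (pp q)
  | .Q1 => oX
  | .Q2 => oY
  | .Q2i => oYi
  | .R => oR (pp q) (cc q t)

variable {q t}

theorem genOp_rel (hq : q ≠ 0) ⦃x y : FA⦄ (h : ARel q t x y) :
    FreeAlgebra.lift ℂ (genOp q t) x = FreeAlgebra.lift ℂ (genOp q t) y := by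
  have hp := pp_ne hq
  cases h <;>
    simp only [gA, map_mul, map_add, map_sub, map_smul, map_one, FreeAlgebra.lift_ι_apply, genOp,
      pp4]
  case P2P2i => exact LinearMap.ext (oP2_P2i hp)
  case P2iP2 => exact LinearMap.ext (oP2i_P2 hp)
  case Q2Q2i => exact LinearMap.ext oY_Yi
  case Q2iQ2 => exact LinearMap.ext oYi_Y
  case P2P1 => exact VV_ext fun a b s m d => (P2_PR hp a b s m d).1
  case Q2Q1 => exact LinearMap.ext fun v => (oX_Y v).symm
  case P2Q2 => exact LinearMap.ext (oP2_Y hp)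
  case P2Q1 => exact LinearMap.ext oP2_X
  case P1Q2 => exact LinearMap.ext (oP1_Y hp)
  case P1Q1 => exact LinearMap.ext oP1_X
  case P2R => exact VV_ext fun a b s m d => (P2_PR hp a b s m d).2
  case RQ2 => exact LinearMap.ext (oR_Y hp)
  case P1R => exact VV_ext fun a b s m d => (P1R_RR hp a b s m d).1
  case RQ1 => exact LinearMap.ext oR_X
  case RR => exact VV_ext fun a b s m d => (P1R_RR hp a b s m d).2

def repA (hq : q ≠ 0) : AlgA q t →ₐ[ℂ] Module.End ℂ VV :=
  RingQuot.liftAlgHom ℂ ⟨FreeAlgebra.lift ℂ (genOp q t), genOp_rel hq⟩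

theorem repA_mk (hq : q ≠ 0) (g : AGen) :
    repA hq (RingQuot.mkAlgHom ℂ (ARel q t) (gA g)) = genOp q t g := by
  simp [repA, gA]

theorem zp_map {A B : Type*} [Monoid A] [Monoid B] (f : A →* B) (x xi : A) (n : ℤ) :
    f (zp x xi n) = zp (f x) (f xi) n := by
  cases n <;> simp [zp]

theorem oP2_zp (hp : pp q ≠ 0) (d : ℤ) :
    zp (M := Module.End ℂ VV) (oP2 (pp q)) (oP2i (pp q)) d (EE 0 0 0 0 0) = EE 0 0 0 0 d := by
  have h1 : (oP2 (pp q) : Module.End ℂ VV) * oP2i (pp q) = 1 := LinearMap.ext (oP2_P2i hp)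
  have h2 : (oP2i (pp q) : Module.End ℂ VV) * oP2 (pp q) = 1 := LinearMap.ext (oP2i_P2 hp)
  induction d with
  | zero => simp [zp]
  | succ n ih =>
    rw [← zp_succ h1 h2, Module.End.mul_apply, ih, oP2_EE]
    simp
  | pred n ih =>
    rw [← zp_pred h1 h2, Module.End.mul_apply, ih, oP2i_EE]
    simp

theorem oY_zp (b s m d) :
    zp (M := Module.End ℂ VV) oY oYi b (EE 0 0 s m d) = EE 0 b s m d := by
  have h1 : (oY : Module.End ℂ VV) * oYi = 1 := LinearMap.ext oY_Yi
  have h2 : (oYi : Module.End ℂ VV) * oY = 1 := LinearMap.ext oYi_Y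
  induction b with
  | zero => simp [zp]
  | succ n ih => rw [← zp_succ h1 h2, Module.End.mul_apply, ih, oY_EE]
  | pred n ih => rw [← zp_pred h1 h2, Module.End.mul_apply, ih, oYi_EE]

theorem oP1_pow (p c : ℂ) (m d) :
    ((oP1 p c : Module.End ℂ VV) ^ m) (EE 0 0 0 0 d) = EE 0 0 0 m d := by
  induction m with
  | zero => simp
  | succ n ih => rw [pow_succ', Module.End.mul_apply, ih, oP1_00]; simp

theorem oX_pow (a b s m d) :
    ((oX : Module.End ℂ VV) ^ a) (EE 0 b s m d) = EE a b s m d := by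
  induction a with
  | zero => simp
  | succ n ih => rw [pow_succ', Module.End.mul_apply, ih, oX_EE]

theorem oR_pow (p c : ℂ) (s : Fin 2) (m d) :
    ((oR p c : Module.End ℂ VV) ^ (s : ℕ)) (EE 0 0 0 m d) = EE 0 0 s m d := by
  fin_cases s
  · simp
  · simp [oR_00]

theorem repA_pbw (hq : q ≠ 0) (i) : repA (t := t) hq (pbwA q t i) (EE 0 0 0 0 0) =
    Finsupp.single i 1 := by
  obtain ⟨a, b, s, m, d⟩ := i
  have hz : ∀ x xi n, repA (t := t) hq (zp x xi n) = zp (repA hq x) (repA hq xi) n :=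
    fun x xi n => zp_map (repA (t := t) hq).toMonoidHom x xi n
  simp only [pbwA, map_mul, map_pow, hz, Q1, Q2, Q2i, R, P1, P2, P2i, repA_mk, genOp,
    Module.End.mul_apply]
  rw [oP2_zp (pp_ne hq), oP1_pow, oR_pow, oY_zp, oX_pow, EE]

/-! Spanning -/

variable (q t) in
def phi : VV →ₗ[ℂ] AlgA q t := Finsupp.linearCombination ℂ (pbwA q t)

theorem phi_EE (a b s m d) : phi q t (EE a b s m d) = Q1 q t ^ a * (zp (Q2 q t) (Q2i q t) b *
    (R q t ^ (s : ℕ) * (P1 q t ^ m * zp (P2 q t) (P2i q t) d))) := by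
  simp [phi, EE, pbwA, mul_assoc]

theorem phi_X (v) : phi q t (oX v) = Q1 q t * phi q t v := by
  have : phi q t ∘ₗ oX = LinearMap.mulLeft ℂ (Q1 q t) ∘ₗ phi q t := by
    apply VV_ext
    intro a b s m d
    simp only [LinearMap.comp_apply, LinearMap.mulLeft_apply, oX_EE, phi_EE, pow_succ', mul_assoc]
  exact LinearMap.congr_fun this v

theorem phi_Y (v) : phi q t (oY v) = Q2 q t * phi q t v := by
  have : phi q t ∘ₗ oY = LinearMap.mulLeft ℂ (Q2 q t) ∘ₗ phi q t := by
    apply VV_ext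
    intro a b s m d
    have hc : Commute (Q2 q t) (Q1 q t ^ a) := Commute.pow_right (r_Q2Q1 q t) a
    simp only [LinearMap.comp_apply, LinearMap.mulLeft_apply, oY_EE, phi_EE,
      ← zp_succ (r_Q2Q2i q t) (r_Q2iQ2 q t)]
    rw [← mul_assoc (Q2 q t) (Q1 q t ^ a), hc.eq]
    simp only [mul_assoc]
  exact LinearMap.congr_fun this v

theorem phi_Yi (v) : phi q t (oYi v) = Q2i q t * phi q t v := by
  rw [← oY_Yi v, phi_Y, oY_Yi, ← mul_assoc, r_Q2iQ2, one_mul]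

theorem zp_P2_P1 (m d) : P2 q t * (P1 q t ^ m * zp (P2 q t) (P2i q t) d) =
    P1 q t ^ m * zp (P2 q t) (P2i q t) (d + 1) := by
  have hc : Commute (P2 q t) (P1 q t ^ m) := Commute.pow_right (r_P2P1 q t) m
  rw [← mul_assoc, hc.eq, mul_assoc, zp_succ (r_P2P2i q t) (r_P2iP2 q t)]

theorem phi_P2 (hq : q ≠ 0) (v) : phi q t (oP2 (pp q) v) = P2 q t * phi q t v := by
  have : phi q t ∘ₗ oP2 (pp q) = LinearMap.mulLeft ℂ (P2 q t) ∘ₗ phi q t := by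
    have hp := pp_ne hq
    apply VV_ext
    intro a b s m d
    simp only [LinearMap.comp_apply, LinearMap.mulLeft_apply]
    induction a with
    | zero =>
      have h := zp_q_comm (r_Q2Q2i q t) (r_Q2iQ2 q t) (mul_ne_zero hp hp) (r_P2Q2 q t) b
      rw [oP2_EE, map_smul, phi_EE, phi_EE, pow_zero, pow_zero, one_mul, one_mul, one_mul, ← mul_assoc (P2 q t), h,
        smul_mul_assoc, mul_assoc (zp (Q2 q t) (Q2i q t) b), mul_zpow]
      fin_cases s
      · simp [zp_P2_P1]
      · simp only [Fin.mk_one, Fin.val_one, pow_one, pow_zero, one_mul]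
        rw [← mul_assoc (P2 q t), r_P2R, smul_mul_assoc, mul_assoc (R q t), zp_P2_P1, mul_smul_comm,
          smul_smul]
    | succ a ih =>
      rw [EE_succ, oP2_X, map_smul, phi_X, phi_X, ih, ← mul_assoc, ← mul_assoc, r_P2Q1,
        smul_mul_assoc]
  exact LinearMap.congr_fun this v

theorem phi_P2i (hq : q ≠ 0) (v) : phi q t (oP2i (pp q) v) = P2i q t * phi q t v := by
  rw [← oP2_P2i (pp_ne hq) v, phi_P2 hq, oP2_P2i (pp_ne hq), ← mul_assoc, r_P2iP2, one_mul]

theorem phi_PR (hq : q ≠ 0) (a b s m d) :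
    phi q t (oP1 (pp q) (cc q t) (EE a b s m d)) = P1 q t * phi q t (EE a b s m d) ∧
    phi q t (oR (pp q) (cc q t) (EE a b s m d)) = R q t * phi q t (EE a b s m d) := by
  have hp := pp_ne hq
  induction a with
  | zero =>
    have h1 := zp_q_comm (r_Q2Q2i q t) (r_Q2iQ2 q t) hp (r_P1Q2 q t) b
    have h2 := zp_q_comm (r_Q2Q2i q t) (r_Q2iQ2 q t) hp (r_RQ2 q t) b
    have hQ : Commute (zp (Q2 q t) (Q2i q t) b) (Q1 q t) := by
      have := zp_q_comm (z := Q1 q t) (r_Q2Q2i q t) (r_Q2iQ2 q t) one_ne_zero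
        (by rw [one_smul, r_Q2Q1]) b
      rw [one_zpow, one_smul] at this
      exact this.symm
    have hQ2 : zp (Q2 q t) (Q2i q t) b * Q2 q t = zp (Q2 q t) (Q2i q t) (b + 1) := by
      have := zp_q_comm (z := Q2 q t) (r_Q2Q2i q t) (r_Q2iQ2 q t) one_ne_zero
        (by rw [one_smul]) b
      rw [one_zpow, one_smul] at this
      rw [← this, zp_succ (r_Q2Q2i q t) (r_Q2iQ2 q t)]
    have e1 : ∀ w, P1 q t * (zp (Q2 q t) (Q2i q t) b * w) =
        pp q ^ b • (zp (Q2 q t) (Q2i q t) b * (P1 q t * w)) := fun w => by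
      rw [← mul_assoc, h1, smul_mul_assoc, mul_assoc]
    have e2 : ∀ w, R q t * (zp (Q2 q t) (Q2i q t) b * w) =
        pp q ^ b • (zp (Q2 q t) (Q2i q t) b * (R q t * w)) := fun w => by
      rw [← mul_assoc, h2, smul_mul_assoc, mul_assoc]
    have e3 : ∀ w, P1 q t * (R q t * w) = pp q • (R q t * (P1 q t * w)) +
        (1 - pp q) • (Q1 q t * (P2 q t * w)) := fun w => by
      rw [← mul_assoc, r_P1R]
      simp only [add_mul, smul_mul_assoc, mul_assoc]
    have e4 : ∀ w, R q t * (R q t * w) = cc q t • (Q2 q t * (P2 q t * w))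
        - pp q • (Q2 q t * (P1 q t * (P1 q t * w)))
        - pp q • (Q1 q t * (Q1 q t * (P2 q t * w)))
        + pp q • (Q1 q t * (R q t * (P1 q t * w))) := fun w => by
      rw [← mul_assoc, r_RR]
      simp only [add_mul, sub_mul, smul_mul_assoc, mul_assoc]
    have e5 : ∀ w, zp (Q2 q t) (Q2i q t) b * (Q1 q t * w) =
        Q1 q t * (zp (Q2 q t) (Q2i q t) b * w) := fun w => by
      rw [← mul_assoc, hQ.eq, mul_assoc]
    have e6 : ∀ w, zp (Q2 q t) (Q2i q t) b * (Q2 q t * w) =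
        zp (Q2 q t) (Q2i q t) (b + 1) * w := fun w => by
      rw [← mul_assoc, hQ2]
    have e7 : ∀ w, P1 q t * (P1 q t ^ m * w) = P1 q t ^ (m + 1) * w := fun w => by
      rw [← mul_assoc, pow_succ']
    have e8 : ∀ w, P1 q t * (P1 q t ^ (m + 1) * w) = P1 q t ^ (m + 2) * w := fun w => by
      rw [← mul_assoc, ← pow_succ']
    fin_cases s
    · simp only [Fin.zero_eta, oP1_00, oR_00, map_smul, phi_EE, pow_zero, one_mul, Fin.val_zero,
        Fin.val_one, pow_one, e1, e2, e7, and_self]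
    · simp only [Fin.mk_one, oP1_01, oR_01, map_smul, map_add, map_sub, phi_EE, pow_zero, one_mul,
        Fin.val_zero, Fin.val_one, pow_one, e1, e2, e3, e4, e7, e8, zp_P2_P1, mul_add, mul_sub,
        mul_smul_comm, e5, e6, pow_two, mul_assoc, and_self]
  | succ a ih =>
    rw [EE_succ, oP1_X, oR_X]
    simp only [map_add, map_smul, phi_X, phi_Y, ih.1, ih.2]
    rw [← mul_assoc, ← mul_assoc, ← mul_assoc, ← mul_assoc, ← mul_assoc, r_P1Q1, r_RQ1]
    simp only [add_mul, smul_mul_assoc, and_self]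

theorem phi_gen (hq : q ≠ 0) (g : AGen) (v) :
    phi q t (genOp q t g v) = RingQuot.mkAlgHom ℂ (ARel q t) (gA g) * phi q t v := by
  cases g
  case P2 => exact phi_P2 hq v
  case P2i => exact phi_P2i hq v
  case Q1 => exact phi_X v
  case Q2 => exact phi_Y v
  case Q2i => exact phi_Yi v
  case P1 =>
    have : phi q t ∘ₗ oP1 (pp q) (cc q t) = LinearMap.mulLeft ℂ (P1 q t) ∘ₗ phi q t :=
      VV_ext fun a b s m d => (phi_PR hq a b s m d).1
    exact LinearMap.congr_fun this v
  case R =>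
    have : phi q t ∘ₗ oR (pp q) (cc q t) = LinearMap.mulLeft ℂ (R q t) ∘ₗ phi q t :=
      VV_ext fun a b s m d => (phi_PR hq a b s m d).2
    exact LinearMap.congr_fun this v

theorem phi_all (hq : q ≠ 0) (x : FA) : ∀ v,
    phi q t (FreeAlgebra.lift ℂ (genOp q t) x v) = RingQuot.mkAlgHom ℂ (ARel q t) x * phi q t v := by
  induction x using FreeAlgebra.induction with
  | grade0 r => intro v; simp [Algebra.algebraMap_eq_smul_one]
  | grade1 g => intro v; rw [FreeAlgebra.lift_ι_apply]; exact phi_gen hq g v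
  | mul x y hx hy => intro v; rw [map_mul, map_mul, Module.End.mul_apply, hx, hy, mul_assoc]
  | add x y hx hy => intro v; rw [map_add, map_add, LinearMap.add_apply, map_add, hx, hy, add_mul]

end rels

/-- The family of monomials `Q₁^{a₁}Q₂^{a₂}R^{ε}P₁^{b₁}P₂^{b₂}`, with
`ε ∈ {0,1}`, `a₁, b₁ ∈ ℕ₀` and `a₂, b₂ ∈ ℤ` (negative exponents interpreted via the
inverse generators), is a ℂ-vector-space basis of the algebra `𝒜`. -/
theorem stmt5 (q t : ℂ) (hq : q ≠ 0) (ht : t ≠ 0) :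
    LinearIndependent ℂ (pbwA q t) ∧
      Submodule.span ℂ (Set.range (pbwA q t)) = ⊤ := by
  constructor
  · have h : LinearIndependent ℂ (fun i => (Finsupp.single i 1 :
        (ℕ × ℤ × Fin 2 × ℕ × ℤ) →₀ ℂ)) := Finsupp.linearIndependent_single_one ℂ _
    let f : AlgA q t →ₗ[ℂ] VV :=
      LinearMap.applyₗ (EE 0 0 0 0 0) ∘ₗ (repA (t := t) hq).toLinearMap
    have hf : f ∘ pbwA q t = fun i => Finsupp.single i 1 := by
      funext i
      exact repA_pbw hq i
    exact LinearIndependent.of_comp f (by rw [hf]; exact h)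
  · rw [eq_top_iff, ← Finsupp.range_linearCombination]
    intro y _
    obtain ⟨x, rfl⟩ := RingQuot.mkAlgHom_surjective ℂ (ARel q t) y
    refine ⟨FreeAlgebra.lift ℂ (genOp q t) x (EE 0 0 0 0 0), ?_⟩
    have := phi_all (t := t) hq x (EE 0 0 0 0 0)
    rw [phi_EE] at this
    simpa [phi, zp] using this
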